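/- (Tricomi identity.) Let f, g : ℝ → ℝ be Schwartz functions and let Hf, Hg, H(fg), and H(Hf·Hg) denote the (principal-value) Hilbert transforms of f, g, f·g, and Hf·Hg respectively (all of which exist pointwise). Then for every x ∈ ℝ: H(fg)(x) = Hf(x)·g(x) + f(x)·Hg(x) + H(Hf·Hg)(x). -/

import Mathlib

open MeasureTheory Filter

/-- `h` is the pointwise (principal-value) Hilbert transform of `f`. -/
def IsPVHilbert (f h : ℝ → ℝ) : Prop :=
  ∀ x : ℝ, Tendsto
    (fun ε : ℝ => (Real.pi)⁻¹ * ∫ y in {y : ℝ | ε < |x - y|}, f y / (x - y))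
    (nhdsWithin 0 (Set.Ioi 0)) (nhds (h x))

/-!
A function `F` holomorphic in the upper half-plane, continuous up to `ℝ` and `O(1/|z|)` there
satisfies `H(Re F) = Im F` on `ℝ`. Indeed, by Cauchy's theorem `∫ F(y) / (y - (x - iε)) dy = 0`, so
in the principal value the kernel `1 / (x - y)` truncated at `ε` may be replaced by its sum with
this Cauchy kernel; the sum is the dilate by `ε` of an integrable kernel of integral `-πi`, hence
the limit is `-πi F(x)`.

Such functions are closed under products. If `F` and `G` have real parts `f` and `g` on `ℝ`, then
`FG` has real part `fg - Hf·Hg` and imaginary part `Hf·g + f·Hg`, and `H(Re FG) = Im FG` is the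
identity. For a Schwartz function `f`, twice the integral over the positive frequencies in the
Fourier inversion formula is such an `F`; integrating by parts in the frequency gives its decay.
-/

section HilbertTransform

lemma measurableSet_setOf_lt_abs_sub (x ε : ℝ) : MeasurableSet {y : ℝ | ε < |x - y|} :=
  (isOpen_lt continuous_const (by fun_prop)).measurableSet

lemma integrableOn_div_sub {u : ℝ → ℝ} (hu : Integrable u) (x : ℝ) {ε : ℝ} (hε : 0 < ε) :
    IntegrableOn (fun y => u y / (x - y)) {y : ℝ | ε < |x - y|} := by
  simp_rw [div_eq_mul_inv]
  refine hu.integrableOn.mul_bdd (c := ε⁻¹) (Measurable.aestronglyMeasurable (by fun_prop)) ?_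
  filter_upwards [ae_restrict_mem (measurableSet_setOf_lt_abs_sub x ε)] with y hy
  rw [norm_inv]
  exact inv_anti₀ hε (le_of_lt hy)

lemma IsPVHilbert.sub {u v hu hv : ℝ → ℝ} (Hu : IsPVHilbert u hu) (Hv : IsPVHilbert v hv)
    (hui : Integrable u) (hvi : Integrable v) :
    IsPVHilbert (fun x => u x - v x) (fun x => hu x - hv x) := by
  intro x
  refine ((Hu x).sub (Hv x)).congr' ?_
  filter_upwards [self_mem_nhdsWithin] with ε hε
  simp_rw [sub_div]
  rw [integral_sub (integrableOn_div_sub hui x hε) (integrableOn_div_sub hvi x hε), mul_sub]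

lemma IsPVHilbert.unique {u h₁ h₂ : ℝ → ℝ} (H₁ : IsPVHilbert u h₁) (H₂ : IsPVHilbert u h₂) :
    h₁ = h₂ :=
  funext fun x => tendsto_nhds_unique (H₁ x) (H₂ x)

end HilbertTransform

section ApproximateIdentity

open scoped Topology

variable {𝕜 E : Type*} [RCLike 𝕜] [NormedAddCommGroup E] [NormedSpace ℝ E] [NormedSpace 𝕜 E]

lemma inv_smul_integral_comp_sub_div_smul (k : ℝ → 𝕜) (u : ℝ → E) (x : ℝ) {t : ℝ} (ht : 0 < t) :
    t⁻¹ • ∫ y, k ((x - y) / t) • u y = ∫ s, k s • u (x - t * s) := by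
  have hscale := Measure.integral_comp_div (fun s => k s • u (x - t * s)) t
  simp only [mul_div_cancel₀ _ ht.ne', abs_of_pos ht] at hscale
  rw [← integral_sub_left_eq_self _ volume x]
  simp only [sub_sub_cancel, hscale, inv_smul_smul₀ ht.ne']

lemma tendsto_inv_smul_integral_comp_sub_div_smul [CompleteSpace E] {k : ℝ → 𝕜} {u : ℝ → E}
    {M x : ℝ}
    (hk : Integrable k) (hum : StronglyMeasurable u) (hM : ∀ y, ‖u y‖ ≤ M)
    (hux : ContinuousAt u x) :
    Tendsto (fun t : ℝ => t⁻¹ • ∫ y, k ((x - y) / t) • u y) (𝓝[>] 0) (𝓝 ((∫ s, k s) • u x)) := by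
  rw [← integral_smul_const]
  refine Tendsto.congr' (f₁ := fun t => ∫ s, k s • u (x - t * s)) ?_ ?_
  · filter_upwards [self_mem_nhdsWithin] with t ht
    exact (inv_smul_integral_comp_sub_div_smul k u x ht).symm
  refine tendsto_integral_filter_of_dominated_convergence (fun s => ‖k s‖ * M)
    (.of_forall fun t => ?_) (.of_forall fun t => .of_forall fun s => ?_) (hk.norm.mul_const M)
    (.of_forall fun s => ?_)
  · exact hk.aestronglyMeasurable.smul
      (hum.comp_measurable (by fun_prop : Measurable fun s => x - t * s)).aestronglyMeasurable
  · rw [norm_smul]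
    gcongr
    exact hM _
  · have hline : Tendsto (fun t : ℝ => x - t * s) (𝓝[>] 0) (𝓝 x) :=
      ((by fun_prop : Continuous fun t : ℝ => x - t * s).tendsto' 0 x (by simp)).mono_left
        nhdsWithin_le_nhds
    exact (hux.tendsto.comp hline).const_smul (k s)

end ApproximateIdentity

section UpperHalfPlane

open Complex Asymptotics
open scoped Topology Interval

variable {E : Type*} [NormedAddCommGroup E] [NormedSpace ℂ E] {F : ℂ → E}

lemma norm_intervalIntegral_le_of_diffContOnCl (hF : DiffContOnCl ℂ F {z | 0 < z.im}) {R M : ℝ}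
    (hR : 0 ≤ R) (hM : ∀ z, 0 ≤ z.im → R ≤ ‖z‖ → ‖F z‖ ≤ M) :
    ‖∫ x in -R..R, F (x : ℝ)‖ ≤ 4 * R * M := by
  have hcont : ContinuousOn F {z | 0 ≤ z.im} := closure_setOfPred_lt_im 0 ▸ hF.continuousOn
  have hrect := integral_boundary_rect_eq_zero_of_continuousOn_of_differentiableOn F
    ((-R : ℝ) : ℂ) (R + R * I)
    (hcont.mono fun z hz => by simpa [hR] using (mem_reProdIm.1 hz).2.1)
    (hF.differentiableOn.mono fun z hz => by simpa [hR] using (mem_reProdIm.1 hz).2.1)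
  simp only [ofReal_re, ofReal_im, add_re, add_im, mul_re, mul_im, I_re, I_im, mul_zero, mul_one,
    sub_zero, add_zero, zero_add, zero_mul, ofReal_zero] at hrect
  have htop : ‖∫ x in -R..R, F (x + R * I)‖ ≤ M * |R - -R| := by
    refine intervalIntegral.norm_integral_le_of_norm_le_const fun x _ => hM _ (by simpa) ?_
    simpa [abs_of_nonneg hR] using abs_im_le_norm (x + R * I)
  have hside : ∀ a : ℝ, |a| = R → ‖∫ y in (0 : ℝ)..R, F (a + y * I)‖ ≤ M * |R - 0| := by
    refine fun a ha => intervalIntegral.norm_integral_le_of_norm_le_const fun y hy => hM _ ?_ ?_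
    · rw [Set.uIoc_of_le hR] at hy
      simpa using hy.1.le
    · simpa [ha] using abs_re_le_norm (a + y * I)
  have hright := hside R (abs_of_nonneg hR)
  have hleft := hside (-R) (by rw [abs_neg, abs_of_nonneg hR])
  rw [sub_neg_eq_add, ← two_mul, abs_of_nonneg (by positivity)] at htop
  rw [sub_zero, abs_of_nonneg hR] at hright hleft
  calc ‖∫ x in -R..R, F (x : ℝ)‖
      = ‖(∫ x in -R..R, F (x + R * I)) - I • (∫ y in (0 : ℝ)..R, F (R + y * I))
          + I • ∫ y in (0 : ℝ)..R, F ((-R : ℝ) + y * I)‖ := by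
        congr 1
        rw [← sub_eq_zero, ← hrect]
        abel
    _ ≤ M * (2 * R) + M * R + M * R := by
        refine (norm_add_le _ _).trans (add_le_add ((norm_sub_le _ _).trans ?_) ?_)
        · simpa [norm_smul] using add_le_add htop hright
        · simpa [norm_smul] using hleft
    _ = 4 * R * M := by ring

theorem integral_eq_zero_of_diffContOnCl_of_isLittleO (hF : DiffContOnCl ℂ F {z | 0 < z.im})
    (hint : Integrable fun x : ℝ => F x)
    (hdecay : F =o[Bornology.cobounded ℂ ⊓ 𝓟 {z | 0 ≤ z.im}] fun z => ‖z‖⁻¹) :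
    ∫ x : ℝ, F x = 0 := by
  refine tendsto_nhds_unique
    (intervalIntegral_tendsto_integral hint tendsto_neg_atTop_atBot tendsto_id) ?_
  refine Metric.tendsto_nhds.2 fun δ hδ => ?_
  have hsmall := hdecay.bound (by positivity : 0 < δ / 8)
  rw [eventually_inf_principal] at hsmall
  obtain ⟨R₀, -, hR₀⟩ := (hasBasis_cobounded_norm (E := ℂ)).eventually_iff.1 hsmall
  filter_upwards [eventually_ge_atTop R₀, eventually_gt_atTop 0] with R hR hRpos
  have hM : ∀ z : ℂ, 0 ≤ z.im → R ≤ ‖z‖ → ‖F z‖ ≤ δ / 8 * R⁻¹ := by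
    intro z him hz
    refine (hR₀ (hR.trans hz) him).trans ?_
    rw [norm_inv, norm_norm]
    gcongr
  rw [dist_zero_right]
  calc ‖∫ x in -R..R, F (x : ℝ)‖ ≤ 4 * R * (δ / 8 * R⁻¹) :=
        norm_intervalIntegral_le_of_diffContOnCl hF hRpos.le hM
    _ = δ / 2 := by field_simp; norm_num
    _ < δ := half_lt_self hδ

end UpperHalfPlane

section DecayingHolomorphic

open Complex Asymptotics
open scoped Topology

variable {E : Type*} [NormedAddCommGroup E] [NormedSpace ℂ E]

/-- Functions holomorphic in the open upper half-plane, continuous up to the real line and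
`O(1/|z|)` at infinity. For complex values, the imaginary part on the real line is the Hilbert
transform of the real part. Nothing is required of `F` in the lower half-plane. -/
structure IsDecayingHolomorphic (F : ℂ → E) : Prop where
  diffContOnCl : DiffContOnCl ℂ F {z | 0 < z.im}
  isBigO : F =O[𝓟 {z | 0 ≤ z.im}] fun z => (1 + ‖z‖)⁻¹

namespace IsDecayingHolomorphic

variable {F : ℂ → ℂ} {G : ℂ → E}

lemma continuous_ofReal (hG : IsDecayingHolomorphic G) : Continuous fun x : ℝ => G x := by
  have hcont : ContinuousOn G {z | 0 ≤ z.im} :=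
    closure_setOfPred_lt_im 0 ▸ hG.diffContOnCl.continuousOn
  exact hcont.comp_continuous Complex.continuous_ofReal fun _ => by simp

lemma exists_norm_le (hG : IsDecayingHolomorphic G) : ∃ M, ∀ x : ℝ, ‖G x‖ ≤ M := by
  obtain ⟨C, hC, hbound⟩ := hG.isBigO.exists_nonneg
  refine ⟨C, fun x => (isBigOWith_principal.1 hbound x (by simp)).trans ?_⟩
  rw [norm_inv, Real.norm_of_nonneg (by positivity)]
  exact mul_le_of_le_one_right hC (inv_le_one_of_one_le₀ (by simp))

lemma const_smul (hG : IsDecayingHolomorphic G) (c : ℂ) : IsDecayingHolomorphic (c • G) :=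
  ⟨hG.diffContOnCl.const_smul c, hG.isBigO.const_smul_left c⟩

lemma smul (hF : IsDecayingHolomorphic F) (hG : IsDecayingHolomorphic G) :
    IsDecayingHolomorphic (F • G) := by
  refine ⟨hF.diffContOnCl.smul hG.diffContOnCl, (hF.isBigO.smul hG.isBigO).trans ?_⟩
  refine .of_norm_le fun z => ?_
  rw [norm_smul, norm_inv, Real.norm_of_nonneg (by positivity)]
  exact mul_le_of_le_one_left (by positivity) (inv_le_one_of_one_le₀ (by simp))

lemma integrable_smul (hF : IsDecayingHolomorphic F) (hG : IsDecayingHolomorphic G) :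
    Integrable fun x : ℝ => F x • G x := by
  obtain ⟨C, hC, hbound⟩ := (hF.isBigO.smul hG.isBigO).exists_nonneg
  refine (integrable_inv_one_add_sq.const_mul C).mono'
    (hF.continuous_ofReal.smul hG.continuous_ofReal).aestronglyMeasurable (.of_forall fun x => ?_)
  refine (isBigOWith_principal.1 hbound x (by simp)).trans ?_
  rw [smul_eq_mul, ← mul_inv, norm_inv, Real.norm_of_nonneg (by positivity), norm_real]
  gcongr
  nlinarith [norm_nonneg x, sq_abs x, Real.norm_eq_abs x]

lemma integrable_clm_mul_clm (hF : IsDecayingHolomorphic F) (hG : IsDecayingHolomorphic G)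
    (A : ℂ →L[ℝ] ℝ) (B : E →L[ℝ] ℝ) : Integrable fun x : ℝ => A (F x) * B (G x) := by
  refine ((hF.integrable_smul hG).norm.const_mul (‖A‖ * ‖B‖)).mono'
    ((A.continuous.comp hF.continuous_ofReal).mul
      (B.continuous.comp hG.continuous_ofReal)).aestronglyMeasurable (.of_forall fun x => ?_)
  rw [norm_mul, norm_smul, mul_mul_mul_comm]
  gcongr
  · exact A.le_opNorm _
  · exact B.le_opNorm _

lemma integral_smul_eq_zero (hF : IsDecayingHolomorphic F) (hG : IsDecayingHolomorphic G) :
    ∫ x : ℝ, F x • G x = 0 := by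
  refine integral_eq_zero_of_diffContOnCl_of_isLittleO (F := F • G)
    (hF.smul hG).diffContOnCl (hF.integrable_smul hG) ?_
  have hzero : (fun z : ℂ => (1 + ‖z‖)⁻¹) =o[Bornology.cobounded ℂ] fun _ => (1 : ℝ) :=
    (isLittleO_one_iff ℝ).2 <| tendsto_inv_atTop_zero.comp <|
      tendsto_atTop_add_const_left _ 1 tendsto_norm_cobounded_atTop
  have hinv : (fun z : ℂ => (1 + ‖z‖)⁻¹) =O[Bornology.cobounded ℂ] fun z => ‖z‖⁻¹ := by
    refine .of_bound' ?_
    filter_upwards [Bornology.eventually_ne_cobounded 0] with z hz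
    rw [norm_inv, norm_inv, Real.norm_of_nonneg (by positivity), norm_norm]
    gcongr
    simp
  have hsq := (hzero.smul_isBigO hinv).mono (inf_le_left (b := 𝓟 {z : ℂ | 0 ≤ z.im}))
  simp only [one_smul] at hsq
  exact ((hF.isBigO.smul hG.isBigO).mono inf_le_right).trans_isLittleO hsq

end IsDecayingHolomorphic

lemma isDecayingHolomorphic_inv_sub {p : ℂ} (hp : p.im < 0) :
    IsDecayingHolomorphic fun z => (z - p)⁻¹ := by
  have him : ∀ z : ℂ, 0 ≤ z.im → -p.im ≤ ‖z - p‖ := fun z hz =>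
    calc -p.im ≤ (z - p).im := by simpa using hz
      _ ≤ ‖z - p‖ := im_le_norm _
  have hne : ∀ z : ℂ, 0 ≤ z.im → z - p ≠ 0 := fun z hz =>
    norm_pos_iff.1 ((neg_pos.2 hp).trans_le (him z hz))
  constructor
  · refine DifferentiableOn.diffContOnCl ?_
    rw [closure_setOfPred_lt_im]
    exact (differentiableOn_id.sub_const p).inv hne
  · refine isBigO_principal.2 ⟨1 + (1 + ‖p‖) / -p.im, fun z hz => ?_⟩
    rw [norm_inv, norm_inv, Real.norm_of_nonneg (by positivity), ← div_eq_mul_inv,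
      inv_eq_one_div, div_le_div_iff₀ (norm_pos_iff.2 (hne z hz)) (by positivity)]
    have hfar : 1 + ‖p‖ ≤ (1 + ‖p‖) / -p.im * ‖z - p‖ := by
      rw [div_mul_eq_mul_div, le_div_iff₀ (neg_pos.2 hp)]
      gcongr
      exact him z hz
    linarith [norm_le_norm_sub_add z p]

end DecayingHolomorphic

section PrincipalValue

open Complex
open scoped Topology

/-- The truncated Hilbert kernel minus the Cauchy kernel with pole at `i`, both at scale `1`. Unlike
either of them it is integrable, so its dilates form an approximate identity. -/
noncomputable def truncatedSubCauchyKernel (s : ℝ) : ℂ :=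
  {s : ℝ | 1 < |s|}.indicator (fun s => (s : ℂ)⁻¹) s - (s - I)⁻¹

lemma ofReal_sub_I_ne_zero (s : ℝ) : (s : ℂ) - I ≠ 0 := fun h => by
  simpa using congrArg im h

lemma norm_truncatedSubCauchyKernel_le (s : ℝ) :
    ‖truncatedSubCauchyKernel s‖ ≤ 2 * (1 + s ^ 2)⁻¹ := by
  rw [truncatedSubCauchyKernel, ← div_eq_mul_inv]
  by_cases hs : 1 < |s|
  · have hs0 : (s : ℂ) ≠ 0 := ofReal_ne_zero.2 (abs_pos.1 (one_pos.trans hs))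
    have hre : |s| ≤ ‖(s : ℂ) - I‖ := by simpa using abs_re_le_norm ((s : ℂ) - I)
    have hdiff : (s : ℂ)⁻¹ - (s - I)⁻¹ = -I / (s * (s - I)) := by
      rw [inv_sub_inv hs0 (ofReal_sub_I_ne_zero s), sub_sub_cancel_left]
    rw [Set.indicator_of_mem (by exact hs), hdiff, norm_div, norm_neg, norm_I, norm_mul, norm_real,
      Real.norm_eq_abs]
    calc 1 / (|s| * ‖(s : ℂ) - I‖) ≤ 1 / (|s| * |s|) := by gcongr
      _ ≤ 2 / (1 + s ^ 2) := by
        rw [div_le_div_iff₀ (by positivity) (by positivity), abs_mul_abs_self]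
        nlinarith [sq_abs s]
  · have hs1 : s ^ 2 ≤ 1 := (sq_le_one_iff_abs_le_one s).2 (not_lt.1 hs)
    have him : 1 ≤ ‖(s : ℂ) - I‖ := by simpa using abs_im_le_norm ((s : ℂ) - I)
    rw [Set.indicator_of_notMem (by exact hs), zero_sub, norm_neg, norm_inv]
    calc ‖(s : ℂ) - I‖⁻¹ ≤ 1 := inv_le_one_of_one_le₀ him
      _ ≤ 2 / (1 + s ^ 2) := by rw [le_div_iff₀ (by positivity)]; linarith

lemma integrable_truncatedSubCauchyKernel : Integrable truncatedSubCauchyKernel := by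
  refine (integrable_inv_one_add_sq.const_mul 2).mono' (Measurable.aestronglyMeasurable ?_)
    (.of_forall norm_truncatedSubCauchyKernel_le)
  exact ((by fun_prop : Measurable fun s : ℝ => (s : ℂ)⁻¹).indicator
    (measurableSet_lt measurable_const (by fun_prop))).sub (by fun_prop)

lemma truncatedSubCauchyKernel_add_neg (s : ℝ) :
    truncatedSubCauchyKernel s + truncatedSubCauchyKernel (-s) =
      -(2 * I) * ((1 + s ^ 2)⁻¹ : ℝ) := by
  have hodd : {s : ℝ | 1 < |s|}.indicator (fun s => (s : ℂ)⁻¹) (-s) =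
      -{s : ℝ | 1 < |s|}.indicator (fun s => (s : ℂ)⁻¹) s := by
    by_cases hs : 1 < |s| <;> simp [hs]
  have hneg : ((-s : ℝ) : ℂ) - I = -(s + I) := by push_cast; ring
  have hplus : (s : ℂ) + I ≠ 0 := fun h => by simpa using congrArg im h
  have hfactor : ((1 + s ^ 2 : ℝ) : ℂ) = (s - I) * (s + I) := by
    push_cast
    linear_combination I_sq
  have hminus := ofReal_sub_I_ne_zero s
  rw [truncatedSubCauchyKernel, truncatedSubCauchyKernel, hodd, hneg, ofReal_inv, hfactor]
  field_simp
  ring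

lemma integral_truncatedSubCauchyKernel : ∫ s, truncatedSubCauchyKernel s = -(Real.pi * I) := by
  have hk := integrable_truncatedSubCauchyKernel
  have hsum : (∫ s, truncatedSubCauchyKernel s) + ∫ s, truncatedSubCauchyKernel s =
      -(2 * I) * Real.pi := by
    nth_rewrite 2 [← integral_neg_eq_self]
    rw [← integral_add hk hk.comp_neg]
    simp_rw [truncatedSubCauchyKernel_add_neg]
    rw [integral_const_mul, integral_complex_ofReal, integral_univ_inv_one_add_sq]
  linear_combination hsum / 2

lemma indicator_inv_sub_eq_truncatedSubCauchyKernel (x y : ℝ) {ε : ℝ} (hε : 0 < ε) :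
    {y : ℝ | ε < |x - y|}.indicator (fun y => ((x - y : ℝ) : ℂ)⁻¹) y =
      (ε : ℂ)⁻¹ * truncatedSubCauchyKernel ((x - y) / ε) - (y - (x - ε * I))⁻¹ := by
  have hε0 : (ε : ℂ) ≠ 0 := ofReal_ne_zero.2 hε.ne'
  have hfar : 1 < |(x - y) / ε| ↔ ε < |x - y| := by rw [abs_div, abs_of_pos hε, one_lt_div hε]
  have hpole : (y : ℂ) - (x - ε * I) = -(ε * (((x - y) / ε : ℝ) - I)) := by
    push_cast
    field_simp
    ring
  rw [truncatedSubCauchyKernel, hpole]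
  simp only [Set.indicator_apply, Set.mem_ofPred_eq, hfar, inv_neg, mul_inv, sub_neg_eq_add]
  split_ifs
  · push_cast
    field_simp
    ring
  · ring

namespace IsDecayingHolomorphic

variable {E : Type*} [NormedAddCommGroup E] [NormedSpace ℂ E] {F : ℂ → E}

lemma integrable_truncatedSubCauchyKernel_smul (hF : IsDecayingHolomorphic F) (x : ℝ) {ε : ℝ}
    (hε : 0 < ε) : Integrable fun y : ℝ => truncatedSubCauchyKernel ((x - y) / ε) • F y := by
  obtain ⟨M, hM⟩ := hF.exists_norm_le
  exact ((integrable_truncatedSubCauchyKernel.comp_div hε.ne').comp_sub_left x).smul_bdd M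
    hF.continuous_ofReal.aestronglyMeasurable (.of_forall hM)

lemma integrableOn_inv_sub_smul (hF : IsDecayingHolomorphic F) (x : ℝ) {ε : ℝ} (hε : 0 < ε) :
    IntegrableOn (fun y : ℝ => ((x - y : ℝ) : ℂ)⁻¹ • F y) {y : ℝ | ε < |x - y|} := by
  rw [← integrable_indicator_iff (measurableSet_setOf_lt_abs_sub x ε)]
  simp only [Set.indicator_smul_left, indicator_inv_sub_eq_truncatedSubCauchyKernel x _ hε,
    sub_smul, mul_smul]
  exact ((hF.integrable_truncatedSubCauchyKernel_smul x hε).fun_smul (ε : ℂ)⁻¹).sub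
    ((isDecayingHolomorphic_inv_sub (by simpa)).integrable_smul hF)

lemma setIntegral_inv_sub_smul (hF : IsDecayingHolomorphic F) (x : ℝ) {ε : ℝ} (hε : 0 < ε) :
    ∫ y in {y : ℝ | ε < |x - y|}, ((x - y : ℝ) : ℂ)⁻¹ • F y =
      ε⁻¹ • ∫ y : ℝ, truncatedSubCauchyKernel ((x - y) / ε) • F y := by
  have hcauchy : IsDecayingHolomorphic fun z => (z - (x - ε * I))⁻¹ :=
    isDecayingHolomorphic_inv_sub (by simpa)
  rw [← integral_indicator (measurableSet_setOf_lt_abs_sub x ε)]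
  simp only [Set.indicator_smul_left, indicator_inv_sub_eq_truncatedSubCauchyKernel x _ hε,
    sub_smul, mul_smul]
  rw [integral_sub ((hF.integrable_truncatedSubCauchyKernel_smul x hε).fun_smul (ε : ℂ)⁻¹)
    (hcauchy.integrable_smul hF), hcauchy.integral_smul_eq_zero hF, sub_zero, integral_smul,
    ← ofReal_inv, coe_smul]

theorem tendsto_setIntegral_inv_sub_smul [CompleteSpace E] (hF : IsDecayingHolomorphic F) (x : ℝ) :
    Tendsto (fun ε : ℝ => ∫ y in {y : ℝ | ε < |x - y|}, ((x - y : ℝ) : ℂ)⁻¹ • F y)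
      (𝓝[>] 0) (𝓝 (-(Real.pi * I) • F x)) := by
  obtain ⟨M, hM⟩ := hF.exists_norm_le
  have hcont := hF.continuous_ofReal
  rw [← integral_truncatedSubCauchyKernel]
  refine (tendsto_inv_smul_integral_comp_sub_div_smul integrable_truncatedSubCauchyKernel
    hcont.stronglyMeasurable hM (hcont.continuousAt (x := x))).congr' ?_
  filter_upwards [self_mem_nhdsWithin] with ε hε
  exact (hF.setIntegral_inv_sub_smul x hε).symm

theorem isPVHilbert {F : ℂ → ℂ} (hF : IsDecayingHolomorphic F) :
    IsPVHilbert (fun x => (F x).re) (fun x => (F x).im) := by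
  intro x
  have hlim := ((continuous_re.tendsto _).comp (hF.tendsto_setIntegral_inv_sub_smul x)).const_mul
    Real.pi⁻¹
  have hvalue : Real.pi⁻¹ * (-(Real.pi * I) • F x).re = (F x).im := by
    simp [Real.pi_ne_zero]
  rw [hvalue] at hlim
  refine hlim.congr' ?_
  filter_upwards [self_mem_nhdsWithin] with ε hε
  rw [Function.comp_apply, ← reCLM_apply,
    ← reCLM.integral_comp_comm (hF.integrableOn_inv_sub_smul x hε)]
  simp only [reCLM_apply, smul_eq_mul, ← ofReal_inv, re_ofReal_mul, inv_mul_eq_div]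

end IsDecayingHolomorphic

end PrincipalValue

section FourierLaplace

open Complex Asymptotics
open scoped Topology FourierTransform ComplexConjugate

variable {E : Type*} [NormedAddCommGroup E] [NormedSpace ℂ E] {ψ ψ' : ℝ → E}

/-- The function on the upper half-plane whose boundary value has frequencies `ψ` on `(0, ∞)` and
none on `(-∞, 0)`, in Mathlib's normalization of the Fourier transform. -/
noncomputable def fourierLaplace (ψ : ℝ → E) (z : ℂ) : E :=
  ∫ ξ in Set.Ioi (0 : ℝ), cexp (2 * Real.pi * I * z * ξ) • ψ ξ

lemma norm_cexp_two_pi_I_mul (z : ℂ) (ξ : ℝ) :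
    ‖cexp (2 * Real.pi * I * z * ξ)‖ = Real.exp (-(2 * Real.pi * z.im * ξ)) := by
  rw [norm_exp]
  simp

lemma norm_cexp_two_pi_I_mul_smul_le {z : ℂ} {ξ : ℝ} (hz : 0 ≤ z.im) (hξ : 0 < ξ) (v : E) :
    ‖cexp (2 * Real.pi * I * z * ξ) • v‖ ≤ ‖v‖ := by
  rw [norm_smul, norm_cexp_two_pi_I_mul]
  exact mul_le_of_le_one_left (norm_nonneg _)
    (Real.exp_le_one_iff.2 (neg_nonpos.2 (by positivity)))

lemma integrableOn_cexp_smul (hψ : IntegrableOn ψ (Set.Ioi 0)) {z : ℂ} (hz : 0 ≤ z.im) :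
    IntegrableOn (fun ξ : ℝ => cexp (2 * Real.pi * I * z * ξ) • ψ ξ) (Set.Ioi 0) := by
  refine hψ.norm.mono' ((by fun_prop : Continuous fun ξ : ℝ =>
    cexp (2 * Real.pi * I * z * ξ)).aestronglyMeasurable.smul hψ.aestronglyMeasurable) ?_
  filter_upwards [ae_restrict_mem measurableSet_Ioi] with ξ hξ
  exact norm_cexp_two_pi_I_mul_smul_le hz hξ _

lemma norm_fourierLaplace_le (hψ : IntegrableOn ψ (Set.Ioi 0)) {z : ℂ} (hz : 0 ≤ z.im) :
    ‖fourierLaplace ψ z‖ ≤ ∫ ξ in Set.Ioi (0 : ℝ), ‖ψ ξ‖ := by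
  refine norm_integral_le_of_norm_le hψ.norm ?_
  filter_upwards [ae_restrict_mem measurableSet_Ioi] with ξ hξ
  exact norm_cexp_two_pi_I_mul_smul_le hz hξ _

lemma continuousOn_fourierLaplace (hψ : IntegrableOn ψ (Set.Ioi 0)) :
    ContinuousOn (fourierLaplace ψ) {z | 0 ≤ z.im} := by
  refine continuousOn_of_dominated (fun z hz => (integrableOn_cexp_smul hψ hz).aestronglyMeasurable)
    (fun z hz => ?_) hψ.norm (.of_forall fun ξ => by fun_prop)
  filter_upwards [ae_restrict_mem measurableSet_Ioi] with ξ hξ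
  exact norm_cexp_two_pi_I_mul_smul_le hz hξ _

lemma norm_deriv_cexp_two_pi_I_mul_le {z : ℂ} {b ξ : ℝ} (hb : 0 < b) (hz : b ≤ z.im) (hξ : 0 < ξ) :
    ‖2 * Real.pi * I * ξ * cexp (2 * Real.pi * I * z * ξ)‖ ≤ b⁻¹ := by
  have hdecay : 2 * Real.pi * b * ξ * Real.exp (-(2 * Real.pi * b * ξ)) ≤ 1 := by
    rw [Real.exp_neg, ← div_eq_mul_inv, div_le_one (Real.exp_pos _)]
    linarith [Real.add_one_le_exp (2 * Real.pi * b * ξ)]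
  calc ‖2 * Real.pi * I * ξ * cexp (2 * Real.pi * I * z * ξ)‖
      = 2 * Real.pi * ξ * Real.exp (-(2 * Real.pi * z.im * ξ)) := by
        simp [norm_cexp_two_pi_I_mul, abs_of_pos hξ, Real.pi_pos.le]
    _ ≤ 2 * Real.pi * ξ * Real.exp (-(2 * Real.pi * b * ξ)) := by gcongr
    _ ≤ b⁻¹ := by
        rw [inv_eq_one_div, le_div_iff₀ hb]
        linarith

lemma differentiableOn_fourierLaplace (hψ : IntegrableOn ψ (Set.Ioi 0)) :
    DifferentiableOn ℂ (fourierLaplace ψ) {z | 0 < z.im} := by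
  intro z₀ hz₀
  have hz₀ : 0 < z₀.im := hz₀
  have hnhds : {z : ℂ | z₀.im / 2 < z.im} ∈ 𝓝 z₀ :=
    (isOpen_lt continuous_const continuous_im).mem_nhds (half_lt_self hz₀)
  have hderiv := (hasDerivAt_integral_of_dominated_loc_of_deriv_le
    (F := fun z (ξ : ℝ) => cexp (2 * Real.pi * I * z * ξ) • ψ ξ)
    (F' := fun z (ξ : ℝ) => (2 * Real.pi * I * ξ * cexp (2 * Real.pi * I * z * ξ)) • ψ ξ)
    (bound := fun ξ => (z₀.im / 2)⁻¹ * ‖ψ ξ‖) (μ := volume.restrict (Set.Ioi 0)) hnhds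
    ?_ (integrableOn_cexp_smul hψ hz₀.le) ?_ ?_ (hψ.norm.const_mul _) ?_).2
  · exact hderiv.differentiableAt.differentiableWithinAt
  · filter_upwards [hnhds] with z hz
    exact (integrableOn_cexp_smul hψ ((half_pos hz₀).trans hz).le).aestronglyMeasurable
  · exact (by fun_prop : Continuous fun ξ : ℝ => 2 * Real.pi * I * ξ *
      cexp (2 * Real.pi * I * z₀ * ξ)).aestronglyMeasurable.smul hψ.aestronglyMeasurable
  · filter_upwards [ae_restrict_mem measurableSet_Ioi] with ξ hξ z hz
    rw [norm_smul]
    gcongr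
    exact norm_deriv_cexp_two_pi_I_mul_le (half_pos hz₀) (le_of_lt hz) hξ
  · refine .of_forall fun ξ z _ => HasDerivAt.smul_const ?_ _
    have hexponent : HasDerivAt (fun z : ℂ => 2 * Real.pi * I * z * ξ) (2 * Real.pi * I * ξ) z := by
      simpa using ((hasDerivAt_id z).const_mul (2 * Real.pi * I)).mul_const (ξ : ℂ)
    simpa only [mul_comm] using hexponent.cexp

lemma smul_fourierLaplace [CompleteSpace E] (hderiv : ∀ ξ, 0 ≤ ξ → HasDerivAt ψ (ψ' ξ) ξ)
    (hψ : IntegrableOn ψ (Set.Ioi 0)) (hψ' : IntegrableOn ψ' (Set.Ioi 0)) {z : ℂ}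
    (hz : 0 ≤ z.im) :
    (2 * Real.pi * I * z) • fourierLaplace ψ z = -(ψ 0 + fourierLaplace ψ' z) := by
  set c := 2 * Real.pi * I * z
  have hprod : ∀ ξ : ℝ, 0 ≤ ξ → HasDerivAt (fun ξ : ℝ => cexp (c * ξ) • ψ ξ)
      (cexp (c * ξ) • ψ' ξ + c • cexp (c * ξ) • ψ ξ) ξ := by
    intro ξ hξ
    have hexp : HasDerivAt (fun ξ : ℝ => cexp (c * ξ)) (c * cexp (c * ξ)) ξ := by
      simpa [mul_comm] using ((ofRealCLM.hasDerivAt (x := ξ)).const_mul c).cexp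
    simpa only [mul_smul] using hexp.fun_smul (hderiv ξ hξ)
  have hint := integrableOn_cexp_smul hψ hz
  have hint' := integrableOn_cexp_smul hψ' hz
  have hvanish := tendsto_zero_of_hasDerivAt_of_integrableOn_Ioi
    (fun ξ hξ => hprod ξ (le_of_lt hξ)) (hint'.add (hint.smul c)) hint
  have hparts := integral_Ioi_of_hasDerivAt_of_tendsto' hprod (hint'.add (hint.smul c)) hvanish
  have hsplit := integral_add hint' (hint.smul c)
  simp only [Pi.smul_apply] at hsplit
  rw [hsplit, integral_smul] at hparts
  simp only [ofReal_zero, mul_zero, exp_zero, one_smul, zero_sub] at hparts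
  rw [neg_add, ← sub_eq_add_neg, eq_sub_iff_add_eq', ← hparts]
  rfl

theorem isDecayingHolomorphic_fourierLaplace [CompleteSpace E]
    (hderiv : ∀ ξ, 0 ≤ ξ → HasDerivAt ψ (ψ' ξ) ξ) (hψ : IntegrableOn ψ (Set.Ioi 0))
    (hψ' : IntegrableOn ψ' (Set.Ioi 0)) : IsDecayingHolomorphic (fourierLaplace ψ) := by
  refine ⟨⟨differentiableOn_fourierLaplace hψ, ?_⟩, isBigO_principal.2
    ⟨(∫ ξ in Set.Ioi (0 : ℝ), ‖ψ ξ‖) + (‖ψ 0‖ + ∫ ξ in Set.Ioi (0 : ℝ), ‖ψ' ξ‖), fun z hz => ?_⟩⟩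
  · rw [closure_setOfPred_lt_im]
    exact continuousOn_fourierLaplace hψ
  rw [norm_inv, Real.norm_of_nonneg (by positivity), ← div_eq_mul_inv,
    le_div_iff₀ (by positivity), mul_one_add]
  refine add_le_add (norm_fourierLaplace_le hψ hz) ?_
  calc ‖fourierLaplace ψ z‖ * ‖z‖ ≤ (2 * Real.pi) * (‖fourierLaplace ψ z‖ * ‖z‖) :=
        le_mul_of_one_le_left (by positivity) (by linarith [Real.pi_gt_three])
    _ = ‖(2 * Real.pi * I * z) • fourierLaplace ψ z‖ := by
        simp only [norm_smul, norm_mul, norm_ofNat, norm_real, norm_I, Real.norm_eq_abs,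
          abs_of_pos Real.pi_pos]
        ring
    _ = ‖ψ 0 + fourierLaplace ψ' z‖ := by
        rw [smul_fourierLaplace hderiv hψ hψ' hz, norm_neg]
    _ ≤ ‖ψ 0‖ + ∫ ξ in Set.Ioi (0 : ℝ), ‖ψ' ξ‖ :=
        (norm_add_le _ _).trans (by gcongr; exact norm_fourierLaplace_le hψ' hz)

lemma fourierInv_eq_two_mul_re_fourierLaplace {ψ : ℝ → ℂ} (hψ : Integrable ψ)
    (hherm : ∀ ξ, ψ (-ξ) = conj (ψ ξ)) (x : ℝ) :
    𝓕⁻ ψ x = (2 * (fourierLaplace ψ x).re : ℝ) := by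
  set e : ℝ → ℂ := fun ξ => cexp (2 * Real.pi * I * x * ξ) * ψ ξ with he
  have heint : Integrable e := by
    refine hψ.bdd_mul (c := 1) (by fun_prop) (.of_forall fun ξ => ?_)
    rw [norm_cexp_two_pi_I_mul]
    simp
  have hconj : ∀ ξ, e (-ξ) = conj (e ξ) := by
    intro ξ
    simp only [he, hherm, map_mul, ← exp_conj, conj_ofReal, conj_I, map_ofNat]
    congr 2
    push_cast
    ring
  have hpos : ∫ ξ in Set.Ioi (0 : ℝ), e ξ = fourierLaplace ψ x := rfl
  have hneg : ∫ ξ in Set.Iic (0 : ℝ), e ξ = conj (fourierLaplace ψ x) := by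
    rw [← hpos, ← integral_conj, ← neg_zero, ← integral_comp_neg_Ioi]
    simp_rw [hconj, neg_zero]
  have hinv : 𝓕⁻ ψ x = ∫ ξ, e ξ := by
    rw [Real.fourierInv_eq']
    refine integral_congr_ae (.of_forall fun ξ => ?_)
    simp only [he, smul_eq_mul]
    congr 2
    simp only [RCLike.inner_apply, Real.ringHom_apply, ofReal_mul, ofReal_ofNat]
    ring
  rw [hinv, ← integral_add_compl measurableSet_Ioi heint, Set.compl_Ioi, hpos, hneg, add_conj]

lemma fourier_ofReal_neg (f : ℝ → ℝ) (ξ : ℝ) :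
    𝓕 (fun x => (f x : ℂ)) (-ξ) = conj (𝓕 (fun x => (f x : ℂ)) ξ) := by
  rw [Real.fourier_real_eq_integral_exp_smul, Real.fourier_real_eq_integral_exp_smul,
    ← integral_conj]
  refine integral_congr_ae (.of_forall fun x => ?_)
  simp only [smul_eq_mul, map_mul, ← exp_conj, conj_ofReal, conj_I]
  congr 2
  push_cast
  ring

theorem exists_isDecayingHolomorphic_re_eq (f : SchwartzMap ℝ ℝ) :
    ∃ F : ℂ → ℂ, IsDecayingHolomorphic F ∧ ∀ x : ℝ, (F x).re = f x := by
  set φ : SchwartzMap ℝ ℂ := SchwartzMap.postcompCLM (𝕜 := ℝ) ofRealCLM f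
  set ψ : SchwartzMap ℝ ℂ := 𝓕 φ with hψ
  have hdecay : IsDecayingHolomorphic (fourierLaplace ψ) :=
    isDecayingHolomorphic_fourierLaplace (fun ξ _ => ψ.differentiableAt.hasDerivAt)
      ψ.integrable.integrableOn (SchwartzMap.derivCLM ℝ ℂ ψ).integrable.integrableOn
  refine ⟨(2 : ℂ) • fourierLaplace ψ, hdecay.const_smul 2, fun x => ?_⟩
  have hherm : ∀ ξ, ψ (-ξ) = conj (ψ ξ) := by
    simp only [hψ, SchwartzMap.fourier_coe]
    exact fourier_ofReal_neg f
  have hinversion : (f x : ℂ) = 𝓕⁻ (ψ : ℝ → ℂ) x := by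
    rw [← SchwartzMap.fourierInv_coe, hψ, FourierTransform.fourierInv_fourier_eq]
    rfl
  rw [fourierInv_eq_two_mul_re_fourierLaplace ψ.integrable hherm, ofReal_inj] at hinversion
  rw [hinversion]
  simp

end FourierLaplace

theorem tricomi_identity_general {f g hf hg hfg hh : ℝ → ℝ} {F G : ℂ → ℂ}
    (hF : IsDecayingHolomorphic F) (hG : IsDecayingHolomorphic G)
    (hFf : ∀ x : ℝ, (F x).re = f x) (hGg : ∀ x : ℝ, (G x).re = g x)
    (Hf : IsPVHilbert f hf) (Hg : IsPVHilbert g hg)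
    (Hfg : IsPVHilbert (fun x => f x * g x) hfg) (Hh : IsPVHilbert (fun x => hf x * hg x) hh)
    (x : ℝ) : hfg x = hf x * g x + f x * hg x + hh x := by
  obtain rfl : (fun x : ℝ => (F x).re) = f := funext hFf
  obtain rfl : (fun x : ℝ => (G x).re) = g := funext hGg
  obtain rfl : (fun x : ℝ => (F x).im) = hf := hF.isPVHilbert.unique Hf
  obtain rfl : (fun x : ℝ => (G x).im) = hg := hG.isPVHilbert.unique Hg
  have hdiff := Hfg.sub Hh (hF.integrable_clm_mul_clm hG Complex.reCLM Complex.reCLM)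
    (hF.integrable_clm_mul_clm hG Complex.imCLM Complex.imCLM)
  have hval := congrFun (hdiff.unique (by simpa using (hF.smul hG).isPVHilbert)) x
  linarith [hval]

/-- The Tricomi identity: `H(fg) = H(f)g + fH(g) + H(Hf·Hg)`. -/
theorem tricomi_identity (f g : SchwartzMap ℝ ℝ) (hf hg hfg hh : ℝ → ℝ)
    (Hf : IsPVHilbert (⇑f) hf) (Hg : IsPVHilbert (⇑g) hg)
    (Hfg : IsPVHilbert (fun x : ℝ => f x * g x) hfg)
    (Hh : IsPVHilbert (fun x : ℝ => hf x * hg x) hh) :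
    ∀ x : ℝ, hfg x = hf x * g x + f x * hg x + hh x := by
  obtain ⟨F, hF, hFf⟩ := exists_isDecayingHolomorphic_re_eq f
  obtain ⟨G, hG, hGg⟩ := exists_isDecayingHolomorphic_re_eq g
  exact tricomi_identity_general hF hG hFf hGg Hf Hg Hfg Hh
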